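/- arXiv:quant-ph/0309186 — 2 statements merged into one kernel-verified Lean document; each statement's English description precedes it below -/
import Mathlib

section
/- For any pure three-qutrit state, with λ_1^{(a)} ≤ λ_2^{(a)} ≤ λ_3^{(a)} the increasingly ordered eigenvalues of the a-th one-particle reduced density matrix, the inequality 2λ_2^{(a)} + λ_1^{(a)} ≤ 2λ_2^{(b)} + λ_1^{(b)} + 2λ_2^{(c)} + λ_1^{(c)} holds for every permutation (a,b,c) of (1,2,3). -/
/-!
Since `2λ₂ + λ₁ = 1 - (λ₃ - λ₂)`, the claim is that the top spectral gaps `gₐ = λ₃ - λ₂` satisfy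
`g_b + g_c ≤ 1 + g_a`. Let `v₀` and `w₀` be top eigenvectors of the systems `b` and `c`. The span
of the two top eigenvectors of `a` contains a unit vector `u₁` with `⟨u₁ v₀ w₀ | ψ⟩ = 0`, and
`v₀`, `w₀` extend to orthonormal bases with `⟨u₁ v₁ w₀ | ψ⟩ = ⟨u₁ v₀ w₁ | ψ⟩ = 0`. Let `ψ i j k`
be the coordinates of the state in these bases. Then `g_b + g_c` is at most the sum over the
systems `b` and `c` of the differences of the first and third diagonal entries of `ρ`. In this
sum each `i` contributes at most `∑ j k, |ψ i j k|² + |ψ i 0 0|²`, and `i = 1` contributes at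
most `0` because its three amplitudes with positive coefficient vanish. Hence
`g_b + g_c ≤ 1 - ⟨u₁, ρₐ u₁⟩ + ∑ i, |ψ i 0 0|² ≤ 1 - λ₂ + λ₃`: the last sum is the squared norm
of a column of a matrix `F` with `F Fᴴ = ρₐ`. Without normalisation, `1` becomes `tr ρ`, which is
the same for all three systems.
-/

open scoped BigOperators

/-- The one-particle reduced density matrix of the first qutrit. -/
noncomputable def rho1 (c : Fin 3 → Fin 3 → Fin 3 → ℂ) : Matrix (Fin 3) (Fin 3) ℂ :=
  Matrix.of fun i i' => ∑ j : Fin 3, ∑ k : Fin 3, c i j k * (starRingEnd ℂ) (c i' j k)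

/-- The one-particle reduced density matrix of the second qutrit. -/
noncomputable def rho2 (c : Fin 3 → Fin 3 → Fin 3 → ℂ) : Matrix (Fin 3) (Fin 3) ℂ :=
  Matrix.of fun j j' => ∑ i : Fin 3, ∑ k : Fin 3, c i j k * (starRingEnd ℂ) (c i j' k)

/-- The one-particle reduced density matrix of the third qutrit. -/
noncomputable def rho3 (c : Fin 3 → Fin 3 → Fin 3 → ℂ) : Matrix (Fin 3) (Fin 3) ℂ :=
  Matrix.of fun k k' => ∑ i : Fin 3, ∑ j : Fin 3, c i j k * (starRingEnd ℂ) (c i j k')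

/-- `l` lists the eigenvalues of the Hermitian matrix `M` in increasing order. -/
def IsOrderedSpectrum (M : Matrix (Fin 3) (Fin 3) ℂ) (l : Fin 3 → ℝ) : Prop :=
  Monotone l ∧ ∃ hM : M.IsHermitian, ∃ σ : Equiv.Perm (Fin 3),
    ∀ i, l i = hM.eigenvalues (σ i)

open Matrix
open scoped ComplexOrder Kronecker

section Spectral

variable {m n 𝕜 : Type*} [Fintype n] [RCLike 𝕜]

open scoped Matrix.Norms.L2Operator in
lemma sum_norm_sq_col_le_norm_mul_conjTranspose [Fintype m] [DecidableEq m]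
    (F : Matrix m n 𝕜) (q : n) : ∑ p, ‖F p q‖ ^ 2 ≤ ‖F * Fᴴ‖ := by
  classical
  have hcol : ‖WithLp.toLp 2 (F.col q)‖ ≤ ‖F‖ := by
    have h := F.l2_opNorm_mulVec (PiLp.single 2 q 1)
    rwa [PiLp.ofLp_single, mulVec_single_one, PiLp.norm_single, norm_one, mul_one] at h
  calc ∑ p, ‖F p q‖ ^ 2 = ‖WithLp.toLp 2 (F.col q)‖ ^ 2 := by
        rw [EuclideanSpace.norm_sq_eq]
        rfl
    _ ≤ ‖F‖ ^ 2 := pow_le_pow_left₀ (norm_nonneg _) hcol 2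
    _ = ‖F * Fᴴ‖ := by
        rw [sq, ← l2_opNorm_conjTranspose F, ← l2_opNorm_conjTranspose_mul_self,
          conjTranspose_conjTranspose]

variable [DecidableEq n]

lemma mul_diagonal_mul_conjTranspose_apply_self (A : Matrix m n 𝕜) (δ : n → 𝕜) (i : m) :
    (A * diagonal δ * Aᴴ) i i = ∑ j, (‖A i j‖ : 𝕜) ^ 2 * δ j := by
  simp only [mul_apply (N := Aᴴ), mul_diagonal, conjTranspose_apply, RCLike.star_def,
    ← RCLike.mul_conj, mul_right_comm]

lemma exists_unitary_conj_eq_diagonal_eigenvalues {M : Matrix n n 𝕜} (hM : M.IsHermitian)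
    (σ : Equiv.Perm n) :
    ∃ U ∈ unitaryGroup n 𝕜, U * M * Uᴴ = diagonal fun i => (hM.eigenvalues (σ i) : 𝕜) := by
  let E : Matrix n n 𝕜 := hM.eigenvectorUnitary
  have hE : Eᴴ * E = 1 := Unitary.coe_star_mul_self hM.eigenvectorUnitary
  have hdiag : Eᴴ * M * E = diagonal (RCLike.ofReal ∘ hM.eigenvalues) := by
    rw [← hM.conjStarAlgAut_star_eigenvectorUnitary, Unitary.conjStarAlgAut_star_apply]
    rfl
  refine ⟨Eᴴ.submatrix σ id, mem_unitaryGroup_iff.2 ?_, ?_⟩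
  · rw [star_eq_conjTranspose, conjTranspose_submatrix, conjTranspose_conjTranspose,
      ← submatrix_mul _ _ _ _ _ Function.bijective_id, hE, submatrix_one_equiv]
  · calc Eᴴ.submatrix σ id * M * (Eᴴ.submatrix σ id)ᴴ = (Eᴴ * M * E).submatrix σ σ := by
          rw [conjTranspose_submatrix, conjTranspose_conjTranspose,
            submatrix_mul _ _ _ _ _ Function.bijective_id,
            submatrix_mul _ _ _ _ _ Function.bijective_id, submatrix_id_id]
      _ = diagonal fun i => (hM.eigenvalues (σ i) : 𝕜) := by
          rw [hdiag, submatrix_diagonal_equiv]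
          rfl

open scoped Matrix.Norms.L2Operator in
lemma norm_unitary_conj {U : Matrix n n 𝕜} (hU : U ∈ unitaryGroup n 𝕜) (M : Matrix n n 𝕜) :
    ‖U * M * Uᴴ‖ = ‖M‖ := by
  rw [← star_eq_conjTranspose, CStarRing.norm_mul_mem_unitary _ (Unitary.star_mem hU),
    CStarRing.norm_mem_unitary_mul _ hU]

end Spectral

namespace IsOrderedSpectrum

variable {M : Matrix (Fin 3) (Fin 3) ℂ} {l : Fin 3 → ℝ}

lemma sum_eq_re_trace (h : IsOrderedSpectrum M l) : l 0 + l 1 + l 2 = M.trace.re := by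
  obtain ⟨-, hM, σ, hσ⟩ := h
  rw [hM.trace_eq_sum_eigenvalues, ← Equiv.sum_comp σ]
  simp [Fin.sum_univ_three, hσ]

lemma exists_unitary_conj_eq_diagonal (h : IsOrderedSpectrum M l) (τ : Equiv.Perm (Fin 3)) :
    ∃ U ∈ unitaryGroup (Fin 3) ℂ, U * M * Uᴴ = diagonal fun i => (l (τ i) : ℂ) := by
  obtain ⟨-, hM, σ, hσ⟩ := h
  simpa [hσ] using exists_unitary_conj_eq_diagonal_eigenvalues hM (τ.trans σ)

open scoped Matrix.Norms.L2Operator in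
lemma norm_le (h : IsOrderedSpectrum M l) (hM : M.PosSemidef) : ‖M‖ ≤ l 2 := by
  obtain ⟨U, hU, hdiag⟩ := h.exists_unitary_conj_eq_diagonal (Equiv.refl _)
  obtain ⟨hmono, hM', σ, hσ⟩ := h
  have hnonneg (i : Fin 3) : 0 ≤ l i := hσ i ▸ hM.eigenvalues_nonneg (σ i)
  rw [← norm_unitary_conj hU, hdiag, l2_opNorm_diagonal, pi_norm_le_iff_of_nonneg (hnonneg 2)]
  intro i
  simpa [abs_of_nonneg (hnonneg i)] using hmono (Fin.le_last i)

end IsOrderedSpectrum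

section Givens

lemma exists_unit_mul_add_mul_eq_zero (a b : ℂ) :
    ∃ s t : ℂ, ‖s‖ ^ 2 + ‖t‖ ^ 2 = 1 ∧ s * a + t * b = 0 := by
  obtain ⟨⟨s, t⟩, h, hne⟩ : ∃ v : ℂ × ℂ, v.1 * a + v.2 * b = 0 ∧ 0 < ‖v.1‖ ^ 2 + ‖v.2‖ ^ 2 := by
    by_cases hb : b = 0
    · exact ⟨(0, 1), by simp [hb]⟩
    · exact ⟨(b, -a), by ring, by positivity⟩
  set r := √(‖s‖ ^ 2 + ‖t‖ ^ 2)
  have hr : r ^ 2 = ‖s‖ ^ 2 + ‖t‖ ^ 2 := Real.sq_sqrt hne.le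
  refine ⟨s / r, t / r, ?_, by linear_combination h / r⟩
  simp only [norm_div, Complex.norm_real, div_pow, Real.norm_eq_abs, sq_abs]
  rw [← add_div, hr, div_self hne.ne']

/-- The complex Givens rotation of the last two coordinates of `ℂ³`, with second row `(0, s, t)`.
It is unitary when `‖s‖ ^ 2 + ‖t‖ ^ 2 = 1`, and serves to annihilate the second coordinate of a
vector while fixing the first. -/
noncomputable def givens (s t : ℂ) : Matrix (Fin 3) (Fin 3) ℂ :=
  !![1, 0, 0; 0, s, t; 0, -star t, star s]

lemma givens_mem_unitaryGroup {s t : ℂ} (h : ‖s‖ ^ 2 + ‖t‖ ^ 2 = 1) :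
    givens s t ∈ unitaryGroup (Fin 3) ℂ := by
  have hst : s * (starRingEnd ℂ) s + t * (starRingEnd ℂ) t = 1 := by
    simp only [Complex.mul_conj']
    exact_mod_cast h
  have hst' : t * (starRingEnd ℂ) t + s * (starRingEnd ℂ) s = 1 := by rwa [add_comm]
  rw [mem_unitaryGroup_iff]
  ext i j
  fin_cases i <;> fin_cases j <;>
    simp [givens, mul_apply, Fin.sum_univ_three, mul_comm, hst, hst']

lemma exists_unitary_row_eq_mulVec_eq_zero {M U₀ : Matrix (Fin 3) (Fin 3) ℂ}
    (hU₀ : U₀ ∈ unitaryGroup (Fin 3) ℂ) {δ : Fin 3 → ℝ}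
    (hdiag : U₀ * M * U₀ᴴ = diagonal fun i => (δ i : ℂ)) (y : Fin 3 → ℂ) :
    ∃ U ∈ unitaryGroup (Fin 3) ℂ, U 0 = U₀ 0 ∧ (U *ᵥ y) 1 = 0 ∧
      ((U * M * Uᴴ) 0 0).re = δ 0 ∧
      ((U * M * Uᴴ) 1 1).re ∈ Set.uIcc (δ 1) (δ 2) ∧
      ((U * M * Uᴴ) 2 2).re ∈ Set.uIcc (δ 1) (δ 2) := by
  obtain ⟨s, t, hst, hy⟩ := exists_unit_mul_add_mul_eq_zero ((U₀ *ᵥ y) 1) ((U₀ *ᵥ y) 2)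
  have hconj : givens s t * U₀ * M * (givens s t * U₀)ᴴ =
      givens s t * (diagonal fun i => (δ i : ℂ)) * (givens s t)ᴴ := by
    simp only [← hdiag, conjTranspose_mul, Matrix.mul_assoc]
  rw [← segment_eq_uIcc]
  refine ⟨givens s t * U₀, mul_mem (givens_mem_unitaryGroup hst) hU₀, ?_, ?_, ?_, ?_, ?_⟩
  · ext j
    simp [givens, mul_apply, Fin.sum_univ_three]
  · rw [← mulVec_mulVec]
    simpa [givens, mulVec, dotProduct, Fin.sum_univ_three] using hy
  · rw [hconj, mul_diagonal_mul_conjTranspose_apply_self]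
    simp [givens, Fin.sum_univ_three]
  · rw [hconj, mul_diagonal_mul_conjTranspose_apply_self]
    refine ⟨‖s‖ ^ 2, ‖t‖ ^ 2, by positivity, by positivity, hst, ?_⟩
    simp [givens, Fin.sum_univ_three, ← Complex.ofReal_pow]
  · rw [hconj, mul_diagonal_mul_conjTranspose_apply_self]
    refine ⟨‖t‖ ^ 2, ‖s‖ ^ 2, by positivity, by positivity, add_comm (‖s‖ ^ 2) _ ▸ hst, ?_⟩
    simp [givens, Fin.sum_univ_three, ← Complex.ofReal_pow]

end Givens

section Tensor

variable {ι κ μ : Type*}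

/-- The flattening of a tensor along its first factor: the matrix whose columns are the slices
`c · j k`. -/
def flattening (c : ι → κ → μ → ℂ) : Matrix ι (κ × μ) ℂ :=
  of fun i p => c i p.1 p.2

variable [Fintype κ] [Fintype μ]

/-- The (unnormalised) one-particle reduced density matrix of the first factor. Those of the other
factors are obtained by permuting the arguments of `c`. -/
noncomputable def reducedDensity (c : ι → κ → μ → ℂ) : Matrix ι ι ℂ :=
  flattening c * (flattening c)ᴴ

lemma reducedDensity_apply (c : ι → κ → μ → ℂ) (i i' : ι) :
    reducedDensity c i i' = ∑ j, ∑ k, c i j k * star (c i' j k) := by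
  simp [reducedDensity, flattening, mul_apply, Fintype.sum_prod_type]

lemma re_reducedDensity_apply_self (c : ι → κ → μ → ℂ) (i : ι) :
    (reducedDensity c i i).re = ∑ j, ∑ k, ‖c i j k‖ ^ 2 := by
  simp only [reducedDensity_apply, RCLike.star_def, Complex.mul_conj', Complex.re_sum]
  norm_cast

lemma reducedDensity_swap_right (c : ι → κ → μ → ℂ) :
    reducedDensity (fun i k j => c i j k) = reducedDensity c := by
  ext i i'
  simp only [reducedDensity_apply]
  exact Finset.sum_comm

lemma re_trace_reducedDensity [Fintype ι] (c : ι → κ → μ → ℂ) :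
    (reducedDensity c).trace.re = ∑ i, ∑ j, ∑ k, ‖c i j k‖ ^ 2 := by
  simp only [trace, diag_apply, Complex.re_sum, re_reducedDensity_apply_self]

lemma re_trace_reducedDensity_swap [Fintype ι] (c : ι → κ → μ → ℂ) :
    (reducedDensity fun j i k => c i j k).trace.re = (reducedDensity c).trace.re := by
  simp only [re_trace_reducedDensity]
  exact Finset.sum_comm

lemma posSemidef_reducedDensity [Finite ι] (c : ι → κ → μ → ℂ) :
    (reducedDensity c).PosSemidef :=
  posSemidef_self_mul_conjTranspose _

open scoped Matrix.Norms.L2Operator in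
lemma sum_norm_sq_le_norm_reducedDensity [Fintype ι] [DecidableEq ι] (c : ι → κ → μ → ℂ)
    (j : κ) (k : μ) : ∑ i, ‖c i j k‖ ^ 2 ≤ ‖reducedDensity c‖ :=
  sum_norm_sq_col_le_norm_mul_conjTranspose (flattening c) (j, k)

/-- The contraction of the last two factors of a tensor with two vectors. It is bilinear: no complex
conjugation is applied to `v` and `w`. -/
def contract (v : κ → ℂ) (w : μ → ℂ) (c : ι → κ → μ → ℂ) : ι → ℂ :=
  fun i => ∑ j, ∑ k, v j * w k * c i j k

lemma contract_swap (v : κ → ℂ) (w : μ → ℂ) (c : ι → κ → μ → ℂ) :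
    contract w v (fun i k j => c i j k) = contract v w c := by
  ext i
  simp only [contract, mul_comm (w _)]
  exact Finset.sum_comm

lemma dotProduct_contract_swap [Fintype ι] (u : ι → ℂ) (v : κ → ℂ) (w : μ → ℂ)
    (c : ι → κ → μ → ℂ) :
    u ⬝ᵥ contract v w c = v ⬝ᵥ contract u w fun j i k => c i j k := by
  simp only [dotProduct, contract, Finset.mul_sum]
  rw [Finset.sum_comm]
  simp only [mul_left_comm, mul_assoc]

lemma dotProduct_contract_rotate [Fintype ι] (u : ι → ℂ) (v : κ → ℂ) (w : μ → ℂ)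
    (c : ι → κ → μ → ℂ) :
    u ⬝ᵥ contract v w c = w ⬝ᵥ contract u v fun k i j => c i j k := by
  rw [← contract_swap, dotProduct_contract_swap]

variable [Fintype ι]

/-- The action `(U ⊗ V ⊗ W) c` of local operators on a tensor; for unitary matrices it is a change
of orthonormal basis in each factor. -/
def localAction (U : Matrix ι ι ℂ) (V : Matrix κ κ ℂ) (W : Matrix μ μ ℂ) (c : ι → κ → μ → ℂ) :
    ι → κ → μ → ℂ :=
  fun i j k => U i ⬝ᵥ contract (V j) (W k) c

variable (c : ι → κ → μ → ℂ)

lemma localAction_swap (U : Matrix ι ι ℂ) (V : Matrix κ κ ℂ) (W : Matrix μ μ ℂ) :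
    localAction V U W (fun j i k => c i j k) = fun j i k => localAction U V W c i j k := by
  ext j i k
  exact (dotProduct_contract_swap _ _ _ c).symm

lemma localAction_rotate (U : Matrix ι ι ℂ) (V : Matrix κ κ ℂ) (W : Matrix μ μ ℂ) :
    localAction W U V (fun k i j => c i j k) = fun k i j => localAction U V W c i j k := by
  ext k i j
  exact (dotProduct_contract_rotate _ _ _ c).symm

lemma flattening_localAction (U : Matrix ι ι ℂ) (V : Matrix κ κ ℂ) (W : Matrix μ μ ℂ) :
    flattening (localAction U V W c) = U * (flattening c * (V ⊗ₖ W)ᵀ) := by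
  ext i ⟨j, k⟩
  simp [flattening, localAction, contract, mul_apply, dotProduct, Fintype.sum_prod_type,
    mul_comm (c _ _ _)]

lemma reducedDensity_localAction [DecidableEq κ] [DecidableEq μ] (U : Matrix ι ι ℂ)
    {V : Matrix κ κ ℂ} {W : Matrix μ μ ℂ} (hV : V ∈ unitaryGroup κ ℂ) (hW : W ∈ unitaryGroup μ ℂ) :
    reducedDensity (localAction U V W c) = U * reducedDensity c * Uᴴ := by
  have hVW : (V ⊗ₖ W)ᵀ * ((V ⊗ₖ W)ᵀ)ᴴ = 1 :=
    mem_unitaryGroup_iff.1 (transpose_mem_unitaryGroup_iff.2 (kronecker_mem_unitary hV hW))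
  calc reducedDensity (localAction U V W c)
      = U * (flattening c * ((V ⊗ₖ W)ᵀ * ((V ⊗ₖ W)ᵀ)ᴴ) * (flattening c)ᴴ) * Uᴴ := by
        simp only [reducedDensity, flattening_localAction, conjTranspose_mul, Matrix.mul_assoc]
    _ = U * reducedDensity c * Uᴴ := by rw [hVW, Matrix.mul_one, reducedDensity]

end Tensor

section Gap

lemma re_reducedDensity_sub_add_sub_le {ι : Type*} [Fintype ι] (c : ι → Fin 3 → Fin 3 → ℂ) (w : ι)
    (h00 : c w 0 0 = 0) (h01 : c w 0 1 = 0) (h10 : c w 1 0 = 0) :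
    (reducedDensity (fun j i k => c i j k) 0 0 - reducedDensity (fun j i k => c i j k) 2 2).re +
        (reducedDensity (fun k i j => c i j k) 0 0 - reducedDensity (fun k i j => c i j k) 2 2).re ≤
      (reducedDensity c).trace.re - (reducedDensity c w w).re + ∑ i, ‖c i 0 0‖ ^ 2 := by
  set p : ι → Fin 3 → Fin 3 → ℝ := fun i j k => ‖c i j k‖ ^ 2 with hp
  have hp_nonneg (i j k) : 0 ≤ p i j k := sq_nonneg _
  let excess (i : ι) : ℝ := (∑ j, ∑ k, p i j k) + p i 0 0 -
    ((∑ k, p i 0 k - ∑ k, p i 2 k) + (∑ j, p i j 0 - ∑ j, p i j 2))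
  have hexcess_nonneg (i : ι) : 0 ≤ excess i := by
    simp only [excess, Fin.sum_univ_three]
    linarith [hp_nonneg i 0 2, hp_nonneg i 1 1, hp_nonneg i 1 2, hp_nonneg i 2 0,
      hp_nonneg i 2 1, hp_nonneg i 2 2]
  have hexcess_w : ∑ j, ∑ k, p w j k ≤ excess w := by
    have h00' : p w 0 0 = 0 := by simp [hp, h00]
    have h01' : p w 0 1 = 0 := by simp [hp, h01]
    have h10' : p w 1 0 = 0 := by simp [hp, h10]
    simp only [excess, Fin.sum_univ_three]
    linarith [hp_nonneg w 1 2, hp_nonneg w 2 1, hp_nonneg w 2 2]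
  have hsum : ∑ j, ∑ k, p w j k ≤ ∑ i, excess i :=
    hexcess_w.trans (Finset.single_le_sum (fun i _ => hexcess_nonneg i) (Finset.mem_univ w))
  simp only [excess, Finset.sum_sub_distrib, Finset.sum_add_distrib] at hsum
  rw [re_trace_reducedDensity]
  simp only [Complex.sub_re, re_reducedDensity_apply_self]
  linarith

variable {c : Fin 3 → Fin 3 → Fin 3 → ℂ} {α β γ : Fin 3 → ℝ}

open scoped Matrix.Norms.L2Operator in
lemma conj_sub_add_conj_sub_le_of_localAction_eq_zero {U V W : Matrix (Fin 3) (Fin 3) ℂ}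
    (hU : U ∈ unitaryGroup (Fin 3) ℂ) (hV : V ∈ unitaryGroup (Fin 3) ℂ)
    (hW : W ∈ unitaryGroup (Fin 3) ℂ) (h00 : localAction U V W c 1 0 0 = 0)
    (h01 : localAction U V W c 1 0 1 = 0) (h10 : localAction U V W c 1 1 0 = 0) :
    (((V * reducedDensity (fun j i k => c i j k) * Vᴴ) 0 0).re -
        ((V * reducedDensity (fun j i k => c i j k) * Vᴴ) 2 2).re) +
      (((W * reducedDensity (fun k i j => c i j k) * Wᴴ) 0 0).re -
        ((W * reducedDensity (fun k i j => c i j k) * Wᴴ) 2 2).re) ≤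
    (reducedDensity c).trace.re + ‖reducedDensity c‖ -
      ((U * reducedDensity c * Uᴴ) 1 1).re := by
  have hsum : ∑ i, ‖localAction U V W c i 0 0‖ ^ 2 ≤ ‖reducedDensity c‖ := by
    rw [← norm_unitary_conj hU, ← reducedDensity_localAction c U hV hW]
    exact sum_norm_sq_le_norm_reducedDensity _ 0 0
  have htrace : (U * reducedDensity c * Uᴴ).trace = (reducedDensity c).trace := by
    rw [trace_mul_cycle, ← star_eq_conjTranspose, mem_unitaryGroup_iff'.1 hU, Matrix.one_mul]
  have hcore := re_reducedDensity_sub_add_sub_le _ 1 h00 h01 h10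
  rw [← localAction_swap, ← localAction_rotate, reducedDensity_localAction c U hV hW,
    reducedDensity_localAction _ V hU hW, reducedDensity_localAction _ W hU hV, htrace] at hcore
  simp only [Complex.sub_re] at hcore
  linarith

theorem top_gap_add_top_gap_le (hα : IsOrderedSpectrum (reducedDensity c) α)
    (hβ : IsOrderedSpectrum (reducedDensity fun j i k => c i j k) β)
    (hγ : IsOrderedSpectrum (reducedDensity fun k i j => c i j k) γ) :
    (β 2 - β 1) + (γ 2 - γ 1) ≤ (reducedDensity c).trace.re + (α 2 - α 1) := by
  obtain ⟨U₀, hU₀, hU₀d⟩ := hα.exists_unitary_conj_eq_diagonal (Equiv.refl _)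
  obtain ⟨V₀, hV₀, hV₀d⟩ := hβ.exists_unitary_conj_eq_diagonal Fin.revPerm
  obtain ⟨W₀, hW₀, hW₀d⟩ := hγ.exists_unitary_conj_eq_diagonal Fin.revPerm
  obtain ⟨U, hU, -, h00, -, hα_mem, -⟩ :=
    exists_unitary_row_eq_mulVec_eq_zero hU₀ hU₀d (contract (V₀ 0) (W₀ 0) c)
  obtain ⟨V, hV, hV_row, h10, hβ_top, -, hβ_mem⟩ :=
    exists_unitary_row_eq_mulVec_eq_zero hV₀ hV₀d (contract (U 1) (W₀ 0) fun j i k => c i j k)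
  obtain ⟨W, hW, hW_row, h01, hγ_top, -, hγ_mem⟩ :=
    exists_unitary_row_eq_mulVec_eq_zero hW₀ hW₀d (contract (U 1) (V₀ 0) fun k i j => c i j k)
  rw [← hV_row] at h00 h01
  rw [← hW_row] at h00 h10
  have hle := conj_sub_add_conj_sub_le_of_localAction_eq_zero hU hV hW h00
    ((dotProduct_contract_rotate _ _ _ c).trans h01) ((dotProduct_contract_swap _ _ _ c).trans h10)
  have hα_le : α 1 ≤ ((U * reducedDensity c * Uᴴ) 1 1).re :=
    (le_inf le_rfl (hα.1 (by decide : (1 : Fin 3) ≤ 2))).trans hα_mem.1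
  have hβ_le : ((V * reducedDensity (fun j i k => c i j k) * Vᴴ) 2 2).re ≤ β 1 :=
    hβ_mem.2.trans (sup_le le_rfl (hβ.1 (by decide : (0 : Fin 3) ≤ 1)))
  have hγ_le : ((W * reducedDensity (fun k i j => c i j k) * Wᴴ) 2 2).re ≤ γ 1 :=
    hγ_mem.2.trans (sup_le le_rfl (hγ.1 (by decide : (0 : Fin 3) ≤ 1)))
  have hα_norm := hα.norm_le (posSemidef_reducedDensity c)
  rw [hβ_top, hγ_top] at hle
  simp only [Fin.revPerm_apply, Fin.rev_zero, Fin.reduceLast] at hle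
  linarith

theorem two_mul_add_le (hα : IsOrderedSpectrum (reducedDensity c) α)
    (hβ : IsOrderedSpectrum (reducedDensity fun j i k => c i j k) β)
    (hγ : IsOrderedSpectrum (reducedDensity fun k i j => c i j k) γ) :
    2 * α 1 + α 0 ≤ 2 * β 1 + β 0 + 2 * γ 1 + γ 0 := by
  have hgap := top_gap_add_top_gap_le hα hβ hγ
  have htrα := hα.sum_eq_re_trace
  have htrβ := hβ.sum_eq_re_trace
  have htrγ := hγ.sum_eq_re_trace
  rw [re_trace_reducedDensity_swap] at htrβ
  rw [re_trace_reducedDensity_swap fun i k j => c i j k, reducedDensity_swap_right] at htrγ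
  linarith

end Gap

section Qutrits

variable (c : Fin 3 → Fin 3 → Fin 3 → ℂ)

lemma rho1_eq_reducedDensity : rho1 c = reducedDensity c := by
  ext i i'
  exact (reducedDensity_apply c i i').symm

lemma rho2_eq_reducedDensity : rho2 c = reducedDensity fun j i k => c i j k := by
  ext j j'
  exact (reducedDensity_apply (fun j i k => c i j k) j j').symm

lemma rho3_eq_reducedDensity : rho3 c = reducedDensity fun k i j => c i j k := by
  ext k k'
  exact (reducedDensity_apply (fun k i j => c i j k) k k').symm

end Qutrits

theorem three_qutrit_ineq4_general (c : Fin 3 → Fin 3 → Fin 3 → ℂ)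
    (l : Fin 3 → Fin 3 → ℝ)
    (h1 : IsOrderedSpectrum (rho1 c) (l 0))
    (h2 : IsOrderedSpectrum (rho2 c) (l 1))
    (h3 : IsOrderedSpectrum (rho3 c) (l 2)) :
    ∀ a b c' : Fin 3, a ≠ b → a ≠ c' → b ≠ c' →
      2 * l a 1 + l a 0 ≤ 2 * l b 1 + l b 0 + 2 * l c' 1 + l c' 0 := by
  rw [rho1_eq_reducedDensity] at h1
  rw [rho2_eq_reducedDensity] at h2
  rw [rho3_eq_reducedDensity] at h3
  have hfirst := two_mul_add_le h1 h2 h3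
  have hsecond := two_mul_add_le (c := fun j i k => c i j k) h2 h1
    (by rwa [reducedDensity_swap_right fun k i j => c i j k])
  have hthird := two_mul_add_le (c := fun k i j => c i j k) h3
    (by rwa [reducedDensity_swap_right c])
    (by rwa [reducedDensity_swap_right fun j i k => c i j k])
  intro a b c' hab hac hbc
  fin_cases a <;> fin_cases b <;> fin_cases c' <;>
    first | contradiction | (dsimp only [Fin.zero_eta, Fin.mk_one, Fin.reduceFinMk]; linarith)

theorem three_qutrit_ineq4 (c : Fin 3 → Fin 3 → Fin 3 → ℂ)
    (hnorm : ∑ i : Fin 3, ∑ j : Fin 3, ∑ k : Fin 3, ‖c i j k‖ ^ 2 = 1)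
    (l : Fin 3 → Fin 3 → ℝ)
    (h1 : IsOrderedSpectrum (rho1 c) (l 0))
    (h2 : IsOrderedSpectrum (rho2 c) (l 1))
    (h3 : IsOrderedSpectrum (rho3 c) (l 2)) :
    ∀ a b c' : Fin 3, a ≠ b → a ≠ c' → b ≠ c' →
      2 * l a 1 + l a 0 ≤ 2 * l b 1 + l b 0 + 2 * l c' 1 + l c' 0 :=
  three_qutrit_ineq4_general c l h1 h2 h3
end

section
/- For any pure three-qutrit state, with λ_1^{(a)} ≤ λ_2^{(a)} ≤ λ_3^{(a)} the increasingly ordered eigenvalues of the a-th one-particle reduced density matrix, the inequality 2λ_1^{(a)} + λ_2^{(a)} ≤ 2λ_2^{(b)} + λ_1^{(b)} + 2λ_1^{(c)} + λ_2^{(c)} holds for every permutation (a,b,c) of (1,2,3). -/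
open scoped BigOperators

/-!
Diagonalise the second and third reduced density matrices, and write `t` for the tensor after a
further local change of basis. By the variational principle, `2 λ₁ + λ₂` for the first particle is
at most `2 ρ₀₀ + ρ₁₁` in any orthonormal basis, so it suffices to compare the total weights of the
entries `|t i j k|²` under `(2, 1, 0)` on the first particle and under `(1, 2, 0)` and `(2, 1, 0)`
on the second and third. The comparison fails termwise only at `(i, j, k)` equal to `(0, 2, 1)`,
`(0, 2, 2)`, `(1, 2, 2)` and `(0, 0, 2)`. A unitary on the first particle kills the first three
entries, by making the slice `j = 2` lower triangular; a unitary on the second particle that mixes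
only its two lowest levels kills the last one. The latter rotation keeps `ρ₀₀ + ρ₁₁ = λ₁ + λ₂` and
`ρ₁₁ ≤ λ₂`, hence does not increase `ρ₀₀ + 2 ρ₁₁` beyond `λ₁ + 2 λ₂`.
-/

open Matrix
open scoped Kronecker

namespace ThreeQutrit

section UnitaryMatrices

variable {𝕜 n : Type*} [RCLike 𝕜] [Fintype n]

theorem dotProduct_le_dotProduct_mulVec_of_antivary [DecidableEq n] {S : Matrix n n ℝ}
    (hS : S ∈ doublyStochastic ℝ n) {w l : n → ℝ} (h : Antivary w l) :
    w ⬝ᵥ l ≤ w ⬝ᵥ S *ᵥ l := by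
  obtain ⟨p, hp_nonneg, hp_sum, rfl⟩ := exists_eq_sum_perm_of_mem_doublyStochastic hS
  calc w ⬝ᵥ l = ∑ σ, p σ * (w ⬝ᵥ l) := by rw [← Finset.sum_mul, hp_sum, one_mul]
    _ ≤ ∑ σ, p σ * (w ⬝ᵥ l ∘ σ) := Finset.sum_le_sum fun σ _ =>
        mul_le_mul_of_nonneg_left h.sum_mul_le_sum_mul_comp_perm (hp_nonneg σ)
    _ = w ⬝ᵥ (∑ σ, p σ • σ.permMatrix ℝ) *ᵥ l := by
        simp only [sum_mulVec, dotProduct_sum, smul_mulVec, dotProduct_smul, permMatrix_mulVec,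
          smul_eq_mul]

theorem map_norm_sq_mem_doublyStochastic [DecidableEq n] {U : Matrix n n 𝕜}
    (hU : U ∈ unitaryGroup n 𝕜) : U.map (‖·‖ ^ 2) ∈ doublyStochastic ℝ n := by
  rw [mem_doublyStochastic_iff_sum]
  refine ⟨fun i j => sq_nonneg _, fun i => ?_, fun j => ?_⟩
  · have h : (U * star U) i i = 1 := by rw [mem_unitaryGroup_iff.1 hU, one_apply_eq]
    simp only [mul_apply, star_apply, RCLike.star_def, RCLike.mul_conj] at h
    exact_mod_cast h
  · have h : (star U * U) j j = 1 := by rw [mem_unitaryGroup_iff'.1 hU, one_apply_eq]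
    simp only [mul_apply, star_apply, RCLike.star_def, RCLike.conj_mul] at h
    exact_mod_cast h

theorem re_mul_diagonal_mul_conjTranspose_apply_self [DecidableEq n] {m : Type*}
    (U : Matrix m n 𝕜) (l : n → ℝ) (i : m) :
    RCLike.re ((U * diagonal (RCLike.ofReal (K := 𝕜) ∘ l) * Uᴴ) i i) =
      (U.map (‖·‖ ^ 2) *ᵥ l) i := by
  have h (j : n) : U i j * (l j : 𝕜) * star (U i j) = ((‖U i j‖ ^ 2 * l j : ℝ) : 𝕜) := by
    rw [mul_right_comm, RCLike.star_def, RCLike.mul_conj]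
    push_cast
    rfl
  rw [mul_apply]
  simp only [mul_diagonal, conjTranspose_apply, Function.comp_apply, h, ← RCLike.ofReal_sum,
    RCLike.ofReal_re]
  rfl

theorem dotProduct_le_sum_mul_re_diag_of_antivary [DecidableEq n] {U : Matrix n n 𝕜}
    (hU : U ∈ unitaryGroup n 𝕜) {w l : n → ℝ} (h : Antivary w l) :
    w ⬝ᵥ l ≤ ∑ i, w i * RCLike.re ((U * diagonal (RCLike.ofReal (K := 𝕜) ∘ l) * Uᴴ) i i) := by
  simp only [re_mul_diagonal_mul_conjTranspose_apply_self]
  exact dotProduct_le_dotProduct_mulVec_of_antivary (map_norm_sq_mem_doublyStochastic hU) h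

theorem exists_unitary_mul_isLowerTriangular [LinearOrder n] [LocallyFiniteOrderTop n]
    (A : Matrix n n 𝕜) : ∃ U ∈ unitaryGroup n 𝕜, (U * A).IsLowerTriangular := by
  let columns : nᵒᵈ → EuclideanSpace 𝕜 n := fun j => WithLp.toLp 2 (A.col (OrderDual.ofDual j))
  let b := (InnerProductSpace.gramSchmidtOrthonormalBasis (𝕜 := 𝕜)
    (finrank_euclideanSpace.trans (Fintype.card_orderDual n).symm) columns).reindex OrderDual.ofDual
  refine ⟨b.toBasis.toMatrix (EuclideanSpace.basisFun n 𝕜),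
    b.toMatrix_orthonormalBasis_mem_unitary _, fun i j hij => ?_⟩
  have hrepr : b.repr (columns (OrderDual.toDual j)) i = 0 := by
    rw [OrthonormalBasis.repr_reindex]
    exact InnerProductSpace.gramSchmidtOrthonormalBasis_inv_triangular' _ columns hij
  rw [← hrepr]
  exact congrFun ((EuclideanSpace.basisFun n 𝕜).toBasis.toMatrix_mulVec_repr b.toBasis
    (columns (OrderDual.toDual j))) i

theorem apply_eq_zero_of_mem_unitaryGroup [DecidableEq n] {U : Matrix n n 𝕜}
    (hU : U ∈ unitaryGroup n 𝕜) {k : n} (hcol : ∀ i ≠ k, U i k = 0) {j : n} (hj : j ≠ k) :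
    U k j = 0 := by
  have horth : (star U * U) k j = 0 := by rw [mem_unitaryGroup_iff'.1 hU, one_apply_ne hj.symm]
  have hnorm : (star U * U) k k = 1 := by rw [mem_unitaryGroup_iff'.1 hU, one_apply_eq]
  have hsum (m : n) : (star U * U) k m = star (U k k) * U k m := by
    rw [mul_apply, Finset.sum_eq_single k (fun i _ hi => by simp [hcol i hi]) (by simp), star_apply]
  rw [hsum] at horth hnorm
  exact (mul_eq_zero.1 horth).resolve_left (left_ne_zero_of_mul_eq_one hnorm)

theorem exists_unitary_eq_mul_diagonal_mul_conjTranspose [DecidableEq n] {M : Matrix n n 𝕜}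
    (hM : M.IsHermitian) (σ : Equiv.Perm n) :
    ∃ U ∈ unitaryGroup n 𝕜, M = U * diagonal (RCLike.ofReal ∘ hM.eigenvalues ∘ σ) * Uᴴ := by
  let V : Matrix n n 𝕜 := hM.eigenvectorUnitary
  have hV : V * Vᴴ = 1 := mem_unitaryGroup_iff.1 hM.eigenvectorUnitary.2
  refine ⟨V.submatrix id σ, mem_unitaryGroup_iff.2 ?_, ?_⟩
  · rw [star_eq_conjTranspose, conjTranspose_submatrix, submatrix_mul_equiv, hV, submatrix_id_id]
  · conv_lhs => rw [hM.spectral_theorem, Unitary.conjStarAlgAut_apply]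
    rw [← Function.comp_assoc, ← submatrix_diagonal_equiv, submatrix_mul_equiv,
      conjTranspose_submatrix, submatrix_mul_equiv, submatrix_id_id]
    rfl

end UnitaryMatrices

section LocalUnitaries

variable {𝕜 ι κ μ : Type*} [RCLike 𝕜]

/-- The flattening of a tensor to the matrix of the bipartition of its first factor against the
other two. -/
def unfolding (c : ι → κ → μ → 𝕜) : Matrix ι (κ × μ) 𝕜 :=
  Matrix.of fun i p => c i p.1 p.2

variable [Fintype κ] [Fintype μ]

/-- The reduced density matrix of the first factor of an unnormalised pure state of three
subsystems; those of the other factors are obtained by permuting the arguments of `c`. -/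
def marginal (c : ι → κ → μ → 𝕜) : Matrix ι ι 𝕜 :=
  unfolding c * (unfolding c)ᴴ

theorem marginal_apply (c : ι → κ → μ → 𝕜) (i i' : ι) :
    marginal c i i' = ∑ j, ∑ k, c i j k * starRingEnd 𝕜 (c i' j k) := by
  simp only [marginal, unfolding, mul_apply, of_apply, conjTranspose_apply, RCLike.star_def,
    Fintype.sum_prod_type]

theorem re_marginal_apply_self (c : ι → κ → μ → 𝕜) (i : ι) :
    RCLike.re (marginal c i i) = ∑ j, ∑ k, ‖c i j k‖ ^ 2 := by
  simp only [marginal_apply, RCLike.mul_conj, ← RCLike.ofReal_pow, ← RCLike.ofReal_sum,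
    RCLike.ofReal_re]

theorem marginal_swap (c : ι → κ → μ → 𝕜) : marginal (fun i k j => c i j k) = marginal c := by
  ext i i'
  simp only [marginal_apply]
  exact Finset.sum_comm

variable [Fintype ι]

/-- The action `U ⊗ V ⊗ W` of a local operator on a tensor. -/
def localAction (U : Matrix ι ι 𝕜) (V : Matrix κ κ 𝕜) (W : Matrix μ μ 𝕜) (c : ι → κ → μ → 𝕜) :
    ι → κ → μ → 𝕜 :=
  fun i j k => ∑ i', ∑ j', ∑ k', U i i' * V j j' * W k k' * c i' j' k'

theorem unfolding_localAction (U : Matrix ι ι 𝕜) (V : Matrix κ κ 𝕜) (W : Matrix μ μ 𝕜)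
    (c : ι → κ → μ → 𝕜) :
    unfolding (localAction U V W c) = U * unfolding c * (V ⊗ₖ W)ᵀ := by
  ext i ⟨j, k⟩
  rw [Matrix.mul_assoc]
  simp only [unfolding, localAction, mul_apply, of_apply, transpose_apply, kronecker_apply,
    Fintype.sum_prod_type, Finset.mul_sum]
  refine Finset.sum_congr rfl fun i' _ => Finset.sum_congr rfl fun j' _ =>
    Finset.sum_congr rfl fun k' _ => ?_
  ring

theorem marginal_localAction [DecidableEq κ] [DecidableEq μ] (U : Matrix ι ι 𝕜)
    {V : Matrix κ κ 𝕜} {W : Matrix μ μ 𝕜} (hV : V ∈ unitaryGroup κ 𝕜) (hW : W ∈ unitaryGroup μ 𝕜)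
    (c : ι → κ → μ → 𝕜) : marginal (localAction U V W c) = U * marginal c * Uᴴ := by
  have hVW : (V ⊗ₖ W)ᵀ * (V ⊗ₖ W)ᵀᴴ = 1 := by
    have h := congrArg transpose (mem_unitaryGroup_iff'.1 (kronecker_mem_unitary hV hW))
    rwa [transpose_mul, transpose_one] at h
  rw [marginal, unfolding_localAction, conjTranspose_mul, conjTranspose_mul, marginal]
  calc _ = U * unfolding c * ((V ⊗ₖ W)ᵀ * (V ⊗ₖ W)ᵀᴴ) * ((unfolding c)ᴴ * Uᴴ) := by
        simp only [Matrix.mul_assoc]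
    _ = _ := by rw [hVW]; simp only [Matrix.mul_assoc, Matrix.one_mul]

theorem localAction_swap_fst_snd (U : Matrix ι ι 𝕜) (V : Matrix κ κ 𝕜) (W : Matrix μ μ 𝕜)
    (c : ι → κ → μ → 𝕜) :
    (fun j i k => localAction U V W c i j k) = localAction V U W (fun j i k => c i j k) := by
  funext j i k
  simp only [localAction]
  rw [Finset.sum_comm]
  simp only [mul_comm (U i _)]

theorem localAction_rotate (U : Matrix ι ι 𝕜) (V : Matrix κ κ 𝕜) (W : Matrix μ μ 𝕜)
    (c : ι → κ → μ → 𝕜) :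
    (fun k i j => localAction U V W c i j k) = localAction W U V (fun k i j => c i j k) := by
  funext k i j
  simp only [localAction]
  rw [Finset.sum_comm_cycle]
  simp only [mul_right_comm, mul_comm (W k _), mul_assoc]

theorem localAction_one_right [DecidableEq μ] (U : Matrix ι ι 𝕜) (V : Matrix κ κ 𝕜)
    (c : ι → κ → μ → 𝕜) (i : ι) (j : κ) (k : μ) :
    localAction U V 1 c i j k = ∑ j', V j j' * ∑ i', U i i' * c i' j' k := by
  simp only [localAction, one_apply, mul_ite, ite_mul, mul_one, mul_zero, zero_mul,
    Finset.sum_ite_eq, Finset.mem_univ, if_true, Finset.mul_sum]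
  rw [Finset.sum_comm]
  simp only [mul_left_comm, mul_assoc]

theorem sum_mul_re_marginal_le (t : ι → κ → μ → 𝕜) (α : ι → ℝ) (β : κ → ℝ) (γ : μ → ℝ)
    (hsupp : ∀ i j k, β j + γ k < α i → t i j k = 0) :
    ∑ i, α i * RCLike.re (marginal t i i) ≤
      ∑ j, β j * RCLike.re (marginal (fun j i k => t i j k) j j) +
        ∑ k, γ k * RCLike.re (marginal (fun k i j => t i j k) k k) := by
  have hpoint (i j k) : α i * ‖t i j k‖ ^ 2 ≤ β j * ‖t i j k‖ ^ 2 + γ k * ‖t i j k‖ ^ 2 := by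
    rcases lt_or_ge (β j + γ k) (α i) with hlt | hle
    · simp [hsupp i j k hlt]
    · rw [← add_mul]
      exact mul_le_mul_of_nonneg_right hle (sq_nonneg _)
  simp only [re_marginal_apply_self, Finset.mul_sum]
  calc ∑ i, ∑ j, ∑ k, α i * ‖t i j k‖ ^ 2
      ≤ ∑ i, ∑ j, ∑ k, (β j * ‖t i j k‖ ^ 2 + γ k * ‖t i j k‖ ^ 2) := by
        gcongr with i _ j _ k _
        exact hpoint i j k
    _ = _ := by
        simp only [Finset.sum_add_distrib]
        congr 1
        · exact Finset.sum_comm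
        · exact Finset.sum_comm_cycle

end LocalUnitaries

section Qutrits

variable {c : Fin 3 → Fin 3 → Fin 3 → ℂ} {p q r : Fin 3 → ℝ}

theorem rho1_eq_marginal (c : Fin 3 → Fin 3 → Fin 3 → ℂ) : rho1 c = marginal c := by
  ext i i'
  rw [marginal_apply]
  rfl

theorem rho2_eq_marginal (c : Fin 3 → Fin 3 → Fin 3 → ℂ) :
    rho2 c = marginal fun j i k => c i j k :=
  rho1_eq_marginal fun j i k => c i j k

theorem rho3_eq_marginal (c : Fin 3 → Fin 3 → Fin 3 → ℂ) :
    rho3 c = marginal fun k i j => c i j k :=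
  rho1_eq_marginal fun k i j => c i j k

theorem rho1_localAction {V W : Matrix (Fin 3) (Fin 3) ℂ} (U : Matrix (Fin 3) (Fin 3) ℂ)
    (hV : V ∈ unitaryGroup (Fin 3) ℂ) (hW : W ∈ unitaryGroup (Fin 3) ℂ)
    (c : Fin 3 → Fin 3 → Fin 3 → ℂ) : rho1 (localAction U V W c) = U * rho1 c * Uᴴ := by
  rw [rho1_eq_marginal, rho1_eq_marginal, marginal_localAction U hV hW]

theorem rho2_localAction {U W : Matrix (Fin 3) (Fin 3) ℂ} (hU : U ∈ unitaryGroup (Fin 3) ℂ)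
    (V : Matrix (Fin 3) (Fin 3) ℂ) (hW : W ∈ unitaryGroup (Fin 3) ℂ)
    (c : Fin 3 → Fin 3 → Fin 3 → ℂ) : rho2 (localAction U V W c) = V * rho2 c * Vᴴ := by
  rw [rho2_eq_marginal, rho2_eq_marginal, localAction_swap_fst_snd, marginal_localAction V hU hW]

theorem rho3_localAction {U V : Matrix (Fin 3) (Fin 3) ℂ} (hU : U ∈ unitaryGroup (Fin 3) ℂ)
    (hV : V ∈ unitaryGroup (Fin 3) ℂ) (W : Matrix (Fin 3) (Fin 3) ℂ)
    (c : Fin 3 → Fin 3 → Fin 3 → ℂ) : rho3 (localAction U V W c) = W * rho3 c * Wᴴ := by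
  rw [rho3_eq_marginal, rho3_eq_marginal, localAction_rotate, marginal_localAction W hU hV]

theorem exists_unitary_of_isOrderedSpectrum {M : Matrix (Fin 3) (Fin 3) ℂ}
    (h : IsOrderedSpectrum M p) :
    ∃ U ∈ unitaryGroup (Fin 3) ℂ, M = U * diagonal (RCLike.ofReal ∘ p) * Uᴴ := by
  obtain ⟨-, hM, σ, hp⟩ := h
  obtain rfl : p = hM.eigenvalues ∘ σ := funext hp
  exact exists_unitary_eq_mul_diagonal_mul_conjTranspose hM σ

theorem exists_unitary_col_two_eq_zero_mulVec_eq_zero (v : Fin 3 → ℂ) :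
    ∃ G ∈ unitaryGroup (Fin 3) ℂ, (∀ i ≠ 2, G i 2 = 0) ∧ (G *ᵥ v) 0 = 0 := by
  -- Lower triangularity of `G * [0, v, e₂]` in columns 1 and 2 is exactly the claim.
  obtain ⟨G, hG, hlower⟩ := exists_unitary_mul_isLowerTriangular (of ![0, v, Pi.single 2 1])ᵀ
  have hcol (i j) : (G * (of ![0, v, Pi.single 2 1])ᵀ) i j =
      (G *ᵥ (![0, v, Pi.single 2 1] : Fin 3 → Fin 3 → ℂ) j) i := rfl
  refine ⟨G, hG, fun i hi => ?_, hlower (show (0 : Fin 3) < 1 by decide)⟩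
  have hi2 : i < 2 := by omega
  simpa [hcol] using hlower hi2

theorem exists_unitary_localAction_apply_eq_zero (c : Fin 3 → Fin 3 → Fin 3 → ℂ) :
    ∃ F ∈ unitaryGroup (Fin 3) ℂ, ∃ G ∈ unitaryGroup (Fin 3) ℂ, (∀ i ≠ 2, G i 2 = 0) ∧
      (∀ i k, i < k → localAction F G 1 c i 2 k = 0) ∧ localAction F G 1 c 0 0 2 = 0 := by
  obtain ⟨F, hF, hlower⟩ := exists_unitary_mul_isLowerTriangular (of fun i k => c i 2 k)
  obtain ⟨G, hG, hcol_two, hv⟩ :=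
    exists_unitary_col_two_eq_zero_mulVec_eq_zero fun j => ∑ i, F 0 i * c i j 2
  refine ⟨F, hF, G, hG, hcol_two, fun i k hik => ?_, (localAction_one_right F G c 0 0 2).trans hv⟩
  have hrow (j) (hj : j ≠ 2) : G 2 j = 0 := apply_eq_zero_of_mem_unitaryGroup hG hcol_two hj
  rw [localAction_one_right,
    Finset.sum_eq_single 2 (fun j _ hj => by rw [hrow j hj, zero_mul]) (by simp)]
  exact mul_eq_zero_of_right _ (hlower hik)

theorem sum_mul_re_diag_le_of_col_two_eq_zero {G : Matrix (Fin 3) (Fin 3) ℂ}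
    (hG : G ∈ unitaryGroup (Fin 3) ℂ) (hcol_two : ∀ i ≠ 2, G i 2 = 0) (hq : q 0 ≤ q 1) :
    ∑ j, ![1, 2, 0] j * RCLike.re ((G * diagonal (RCLike.ofReal (K := ℂ) ∘ q) * Gᴴ) j j) ≤
      ![1, 2, 0] ⬝ᵥ q := by
  obtain ⟨hnonneg, hrow, hcol⟩ :=
    mem_doublyStochastic_iff_sum.1 (map_norm_sq_mem_doublyStochastic hG)
  have h02 : G.map (‖·‖ ^ 2) 0 2 = 0 := by simp [hcol_two 0 (by decide)]
  have h12 : G.map (‖·‖ ^ 2) 1 2 = 0 := by simp [hcol_two 1 (by decide)]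
  have h20 : G.map (‖·‖ ^ 2) 2 0 = 0 := by
    simp [apply_eq_zero_of_mem_unitaryGroup hG hcol_two (show (0 : Fin 3) ≠ 2 by decide)]
  simp only [re_mul_diagonal_mul_conjTranspose_apply_self]
  generalize G.map (‖·‖ ^ 2) = S at *
  simp only [Fin.sum_univ_three] at hrow hcol
  have h00 : S 0 0 = 1 - S 1 0 := by linarith [hcol 0]
  have h01 : S 0 1 = S 1 0 := by linarith [hrow 0]
  have h11 : S 1 1 = 1 - S 1 0 := by linarith [hrow 1]
  have hgap : 0 ≤ S 1 0 * (q 1 - q 0) := mul_nonneg (hnonneg 1 0) (sub_nonneg.2 hq)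
  simp only [mulVec, dotProduct, Fin.sum_univ_three, cons_val, h00, h01, h02, h11, h12]
  linarith

/-- The increasingly ordered spectra of the three one-particle reduced density matrices of `c`,
bundled so that relabelling the particles permutes `p`, `q`, `r`. -/
structure HasLocalSpectra (c : Fin 3 → Fin 3 → Fin 3 → ℂ) (p q r : Fin 3 → ℝ) : Prop where
  fst : IsOrderedSpectrum (rho1 c) p
  snd : IsOrderedSpectrum (rho2 c) q
  thd : IsOrderedSpectrum (rho3 c) r

theorem HasLocalSpectra.swap_fst_snd (h : HasLocalSpectra c p q r) :
    HasLocalSpectra (fun j i k => c i j k) q p r where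
  fst := h.snd
  snd := h.fst
  thd := by
    rw [rho3_eq_marginal, ← marginal_swap, ← rho3_eq_marginal]
    exact h.thd

theorem HasLocalSpectra.swap_snd_thd (h : HasLocalSpectra c p q r) :
    HasLocalSpectra (fun i k j => c i j k) p r q where
  fst := by
    rw [rho1_eq_marginal, marginal_swap, ← rho1_eq_marginal]
    exact h.fst
  snd := h.thd
  thd := h.snd

theorem HasLocalSpectra.exists_diagonal (h : HasLocalSpectra c p q r) :
    ∃ d, rho1 d = rho1 c ∧ rho2 d = diagonal (RCLike.ofReal ∘ q) ∧
      rho3 d = diagonal (RCLike.ofReal ∘ r) := by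
  obtain ⟨V, hV, hV_eq⟩ := exists_unitary_of_isOrderedSpectrum h.snd
  obtain ⟨W, hW, hW_eq⟩ := exists_unitary_of_isOrderedSpectrum h.thd
  have hcancel {X D : Matrix (Fin 3) (Fin 3) ℂ} (hX : X ∈ unitaryGroup (Fin 3) ℂ) :
      Xᴴ * (X * D * Xᴴ) * Xᴴᴴ = D := by
    have hX' : Xᴴ * X = 1 := mem_unitaryGroup_iff'.1 hX
    calc _ = Xᴴ * X * D * (Xᴴ * X) := by simp only [Matrix.mul_assoc, conjTranspose_conjTranspose]
      _ = D := by rw [hX', Matrix.one_mul, Matrix.mul_one]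
  have hV' : Vᴴ ∈ unitaryGroup (Fin 3) ℂ := Unitary.star_mem hV
  have hW' : Wᴴ ∈ unitaryGroup (Fin 3) ℂ := Unitary.star_mem hW
  refine ⟨localAction 1 Vᴴ Wᴴ c, ?_, ?_, ?_⟩
  · rw [rho1_localAction 1 hV' hW', conjTranspose_one, Matrix.one_mul, Matrix.mul_one]
  · rw [rho2_localAction (one_mem _) Vᴴ hW', hV_eq, hcancel hV]
  · rw [rho3_localAction (one_mem _) hV' Wᴴ, hW_eq, hcancel hW]

theorem sum_mul_re_rho_le_of_apply_eq_zero {t : Fin 3 → Fin 3 → Fin 3 → ℂ}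
    (hlower : ∀ i k, i < k → t i 2 k = 0) (hcorner : t 0 0 2 = 0) :
    ∑ i, ![2, 1, 0] i * RCLike.re (rho1 t i i) ≤
      ∑ j, ![1, 2, 0] j * RCLike.re (rho2 t j j) +
        ∑ k, ![2, 1, 0] k * RCLike.re (rho3 t k k) := by
  rw [rho1_eq_marginal, rho2_eq_marginal, rho3_eq_marginal]
  refine sum_mul_re_marginal_le t ![2, 1, 0] ![1, 2, 0] ![2, 1, 0] fun i j k hlt => ?_
  fin_cases i <;> fin_cases j <;> fin_cases k <;>
    first | exact hcorner | exact hlower _ _ (by decide) | (norm_num at hlt)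

theorem HasLocalSpectra.weighted_sum_le (h : HasLocalSpectra c p q r) :
    ![2, 1, 0] ⬝ᵥ p ≤ ![1, 2, 0] ⬝ᵥ q + ![2, 1, 0] ⬝ᵥ r := by
  obtain ⟨d, hd1, hd2, hd3⟩ := h.exists_diagonal
  obtain ⟨F, hF, G, hG, hcol_two, hlower, hcorner⟩ := exists_unitary_localAction_apply_eq_zero d
  obtain ⟨U, hU, hU_eq⟩ := exists_unitary_of_isOrderedSpectrum h.fst
  have hweights : Antivary (![2, 1, 0] : Fin 3 → ℝ) p := by
    have : Antitone (![2, 1, 0] : Fin 3 → ℝ) := by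
      rw [Fin.antitone_iff_succ_le]
      intro i
      fin_cases i <;> simp
    exact this.antivary h.fst.1
  have h1 : rho1 (localAction F G 1 d) =
      (F * U) * diagonal (RCLike.ofReal (K := ℂ) ∘ p) * (F * U)ᴴ := by
    rw [rho1_localAction F hG (one_mem _), hd1, hU_eq, conjTranspose_mul]
    simp only [Matrix.mul_assoc]
  have h2 : rho2 (localAction F G 1 d) = G * diagonal (RCLike.ofReal (K := ℂ) ∘ q) * Gᴴ := by
    rw [rho2_localAction hF G (one_mem _), hd2]
  have h3 : rho3 (localAction F G 1 d) = diagonal (RCLike.ofReal (K := ℂ) ∘ r) := by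
    rw [rho3_localAction hF hG 1, hd3, conjTranspose_one, Matrix.one_mul, Matrix.mul_one]
  calc _ ≤ ∑ i, ![2, 1, 0] i * RCLike.re (rho1 (localAction F G 1 d) i i) := by
        rw [h1]
        exact dotProduct_le_sum_mul_re_diag_of_antivary (mul_mem hF hU) hweights
    _ ≤ _ := sum_mul_re_rho_le_of_apply_eq_zero hlower hcorner
    _ ≤ _ := by
        rw [h2, h3]
        refine add_le_add
          (sum_mul_re_diag_le_of_col_two_eq_zero hG hcol_two (h.snd.1 (by decide))) ?_
        simp [dotProduct]

end Qutrits

end ThreeQutrit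

theorem three_qutrit_ineq5 (c : Fin 3 → Fin 3 → Fin 3 → ℂ)
    (hnorm : ∑ i : Fin 3, ∑ j : Fin 3, ∑ k : Fin 3, ‖c i j k‖ ^ 2 = 1)
    (l : Fin 3 → Fin 3 → ℝ)
    (h1 : IsOrderedSpectrum (rho1 c) (l 0))
    (h2 : IsOrderedSpectrum (rho2 c) (l 1))
    (h3 : IsOrderedSpectrum (rho3 c) (l 2)) :
    ∀ a b c' : Fin 3, a ≠ b → a ≠ c' → b ≠ c' →
      2 * l a 0 + l a 1 ≤ 2 * l b 1 + l b 0 + 2 * l c' 0 + l c' 1 := by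
  have h : ThreeQutrit.HasLocalSpectra c (l 0) (l 1) (l 2) := ⟨h1, h2, h3⟩
  intro a b c' hab hac hbc
  suffices ![2, 1, 0] ⬝ᵥ l a ≤ ![1, 2, 0] ⬝ᵥ l b + ![2, 1, 0] ⬝ᵥ l c' by
    simp only [dotProduct, Fin.sum_univ_three, cons_val] at this
    linarith
  have hperm : a = 0 ∧ b = 1 ∧ c' = 2 ∨ a = 0 ∧ b = 2 ∧ c' = 1 ∨ a = 1 ∧ b = 0 ∧ c' = 2 ∨
      a = 1 ∧ b = 2 ∧ c' = 0 ∨ a = 2 ∧ b = 0 ∧ c' = 1 ∨ a = 2 ∧ b = 1 ∧ c' = 0 := by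
    omega
  rcases hperm with ⟨rfl, rfl, rfl⟩ | ⟨rfl, rfl, rfl⟩ | ⟨rfl, rfl, rfl⟩ | ⟨rfl, rfl, rfl⟩ |
    ⟨rfl, rfl, rfl⟩ | ⟨rfl, rfl, rfl⟩
  · exact h.weighted_sum_le
  · exact h.swap_snd_thd.weighted_sum_le
  · exact h.swap_fst_snd.weighted_sum_le
  · exact h.swap_fst_snd.swap_snd_thd.weighted_sum_le
  · exact h.swap_snd_thd.swap_fst_snd.weighted_sum_le
  · exact h.swap_snd_thd.swap_fst_snd.swap_snd_thd.weighted_sum_le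
end
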